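/- Let N ≥ 1 and let m_k, s_k, u : ℝ × ℝ → ℝ (k ∈ {1,…,N}) be differentiable functions of (t, x), let T_k : ℝ × ℝ → ℝ with T_k > 0 everywhere, and let G_k : ℝ × ℝ → ℝ. Suppose at every point: ∂_t m_k + ∂_x(m_k u) = 0 for each k, and m_k T_k (∂_t s_k + u ∂_x s_k) = G_k for each k. Define ρ = ∑_{k=1}^N m_k and assume ρ > 0, and set s = (∑_{k=1}^N m_k s_k)/ρ. Then at every point, ρ (∂_t s + u ∂_x s) = ∑_{k=1}^N G_k / T_k. -/

import Mathlib

open Finset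

/-- Partial derivative with respect to the first (time) variable. -/
noncomputable def pt (f : ℝ × ℝ → ℝ) (z : ℝ × ℝ) : ℝ :=
  deriv (fun s => f (s, z.2)) z.1

/-- Partial derivative with respect to the second (space) variable. -/
noncomputable def px (f : ℝ × ℝ → ℝ) (z : ℝ × ℝ) : ℝ :=
  deriv (fun y => f (z.1, y)) z.2

/-- Mixture entropy equation (Section 2.5): with mass-additive mixture entropy
ρ s = ∑ m_k s_k, phase mass conservation and the phase entropy equations
m_k T_k Ds_k/Dt = G_k imply ρ Ds/Dt = ∑ G_k/T_k. -/
theorem mixture_entropy_equation (N : ℕ) (hN : 1 ≤ N)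
    (m s T G : Fin N → ℝ × ℝ → ℝ) (u : ℝ × ℝ → ℝ)
    (hm : ∀ k, Differentiable ℝ (m k)) (hs : ∀ k, Differentiable ℝ (s k))
    (hu : Differentiable ℝ u)
    (hT : ∀ k z, 0 < T k z)
    (hmass : ∀ k z, pt (m k) z + px (fun q => m k q * u q) z = 0)
    (hent : ∀ k z, m k z * T k z * (pt (s k) z + u z * px (s k) z) = G k z)
    (hρpos : ∀ z : ℝ × ℝ, 0 < ∑ k, m k z) :
    ∀ z : ℝ × ℝ,
      (∑ k, m k z)
        * (pt (fun q => (∑ k, m k q * s k q) / ∑ k, m k q) z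
            + u z * px (fun q => (∑ k, m k q * s k q) / ∑ k, m k q) z)
      = ∑ k, G k z / T k z := by
  intro z
  have hat : ∀ f : ℝ × ℝ → ℝ, Differentiable ℝ f →
      HasDerivAt (fun a => f (a, z.2)) (pt f z) z.1 := by
    intro f hf
    have : DifferentiableAt ℝ (fun a => f (a, z.2)) z.1 := by fun_prop
    exact this.hasDerivAt
  have hax : ∀ f : ℝ × ℝ → ℝ, Differentiable ℝ f →
      HasDerivAt (fun y => f (z.1, y)) (px f z) z.2 := by
    intro f hf
    have : DifferentiableAt ℝ (fun y => f (z.1, y)) z.2 := by fun_prop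
    exact this.hasDerivAt
  have hR : (∑ k, m k z) ≠ 0 := (hρpos z).ne'
  have e1 : pt (fun q => (∑ k, m k q * s k q) / ∑ k, m k q) z =
      ((∑ k, (pt (m k) z * s k z + m k z * pt (s k) z)) * (∑ k, m k z)
        - (∑ k, m k z * s k z) * (∑ k, pt (m k) z)) / (∑ k, m k z) ^ 2 :=
    HasDerivAt.deriv (HasDerivAt.fun_div
      (HasDerivAt.fun_sum fun k _ => (hat _ (hm k)).fun_mul (hat _ (hs k)))
      (HasDerivAt.fun_sum fun k _ => hat _ (hm k)) hR)
  have e2 : px (fun q => (∑ k, m k q * s k q) / ∑ k, m k q) z =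
      ((∑ k, (px (m k) z * s k z + m k z * px (s k) z)) * (∑ k, m k z)
        - (∑ k, m k z * s k z) * (∑ k, px (m k) z)) / (∑ k, m k z) ^ 2 :=
    HasDerivAt.deriv (HasDerivAt.fun_div
      (HasDerivAt.fun_sum fun k _ => (hax _ (hm k)).fun_mul (hax _ (hs k)))
      (HasDerivAt.fun_sum fun k _ => hax _ (hm k)) hR)
  have hM : ∀ k, pt (m k) z = - (u z * px (m k) z) - px u z * m k z := by
    intro k
    have h1 : px (fun q => m k q * u q) z = px (m k) z * u z + m k z * px u z :=
      HasDerivAt.deriv ((hax _ (hm k)).fun_mul (hax _ hu))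
    have h2 := hmass k z
    rw [h1] at h2
    linarith
  have hG : ∀ k, G k z / T k z = m k z * (pt (s k) z + u z * px (s k) z) := by
    intro k
    have h := (hT k z).ne'
    rw [← hent k z]
    field_simp
  have hDR : ∑ k, pt (m k) z = - (u z * ∑ k, px (m k) z) - px u z * ∑ k, m k z := by
    simp only [hM, Finset.sum_sub_distrib, Finset.sum_neg_distrib, Finset.mul_sum]
  have hDS : ∑ k, (pt (m k) z * s k z + m k z * pt (s k) z) =
      - (u z * ∑ k, (px (m k) z * s k z + m k z * px (s k) z))
        - px u z * (∑ k, m k z * s k z) + ∑ k, G k z / T k z := by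
    simp only [Finset.mul_sum, ← Finset.sum_neg_distrib, ← Finset.sum_sub_distrib,
      ← Finset.sum_add_distrib]
    refine Finset.sum_congr rfl fun k _ => ?_
    rw [hG, hM]
    ring
  rw [e1, e2, hDS, hDR]
  field_simp
  ring
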